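/- arXiv:2501.04408 — 3 statements merged into one kernel-verified Lean document; each statement's English description precedes it below -/
import Mathlib

section
/- The uplink rate function r(p,B) = B · log₂(1 + p·g/(N₀·B)) is jointly concave with respect to (p,B) on the open positive quadrant {(p,B) ∈ ℝ × ℝ : p > 0 and B > 0}. (Lemma 1, first bullet.) -/
/-!
The map `(x, t) ↦ t • f (t⁻¹ • x)` is jointly concave for `t > 0` when `f` is concave: a convex
combination of `(x, t)` and `(y, u)` with weights `a, b` is sent by `(x, t) ↦ t⁻¹ • x` to the
convex combination of `t⁻¹ • x` and `u⁻¹ • y` with weights proportional to `a * t` and `b * u`.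
The rate is this transform of `u ↦ logb 2 (1 + (g / N₀) * u)`, evaluated at `(p, B)`.
-/

section Perspective

variable {𝕜 E β : Type*} [Field 𝕜] [AddCommMonoid E] [Module 𝕜 E] [AddCommMonoid β] [Module 𝕜 β]

/-- The perspective of a function `f`, used for `t > 0`. Both variables are packed into one pair
`(x, t)` so that joint concavity is concavity on the product space. -/
def perspective (f : E → β) (x : E × 𝕜) : β :=
  x.2 • f (x.2⁻¹ • x.1)

theorem inv_smul_add_smul_eq {t u a b : 𝕜} (ht : t ≠ 0) (hu : u ≠ 0) (x y : E) :
    (a * t + b * u)⁻¹ • (a • x + b • y) =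
      (a * t / (a * t + b * u)) • t⁻¹ • x + (b * u / (a * t + b * u)) • u⁻¹ • y := by
  match_scalars <;> field_simp

variable [LinearOrder 𝕜] [IsStrictOrderedRing 𝕜]

theorem convex_perspective_domain {s : Set E} (hs : Convex 𝕜 s) :
    Convex 𝕜 {x : E × 𝕜 | 0 < x.2 ∧ x.2⁻¹ • x.1 ∈ s} := by
  rintro ⟨x, t⟩ ⟨ht : 0 < t, hx⟩ ⟨y, u⟩ ⟨hu : 0 < u, hy⟩ a b ha hb hab
  have hT : 0 < a * t + b * u := convex_Ioi (𝕜 := 𝕜) 0 ht hu ha hb hab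
  refine ⟨hT, ?_⟩
  change (a * t + b * u)⁻¹ • (a • x + b • y) ∈ s
  rw [inv_smul_add_smul_eq ht.ne' hu.ne']
  exact hs hx hy (by positivity) (by positivity) (by rw [← add_div, div_self hT.ne'])

theorem concaveOn_perspective [PartialOrder β] [PosSMulMono 𝕜 β] {s : Set E} {f : E → β}
    (hf : ConcaveOn 𝕜 s f) :
    ConcaveOn 𝕜 {x : E × 𝕜 | 0 < x.2 ∧ x.2⁻¹ • x.1 ∈ s} (perspective f) := by
  refine ⟨convex_perspective_domain hf.1, ?_⟩
  rintro ⟨x, t⟩ ⟨ht : 0 < t, hx⟩ ⟨y, u⟩ ⟨hu : 0 < u, hy⟩ a b ha hb hab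
  have hT : 0 < a * t + b * u := convex_Ioi (𝕜 := 𝕜) 0 ht hu ha hb hab
  have jensen : (a * t / (a * t + b * u)) • f (t⁻¹ • x) + (b * u / (a * t + b * u)) • f (u⁻¹ • y) ≤
      f ((a * t + b * u)⁻¹ • (a • x + b • y)) := by
    rw [inv_smul_add_smul_eq ht.ne' hu.ne']
    exact hf.2 hx hy (by positivity) (by positivity) (by rw [← add_div, div_self hT.ne'])
  calc a • t • f (t⁻¹ • x) + b • u • f (u⁻¹ • y)
      = (a * t + b * u) • ((a * t / (a * t + b * u)) • f (t⁻¹ • x) +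
          (b * u / (a * t + b * u)) • f (u⁻¹ • y)) := by
        match_scalars <;> field_simp
    _ ≤ (a * t + b * u) • f ((a * t + b * u)⁻¹ • (a • x + b • y)) :=
        smul_le_smul_of_nonneg_left jensen hT.le

end Perspective

theorem concaveOn_logb_Ioi {b : ℝ} (hb : 1 < b) : ConcaveOn ℝ (Set.Ioi 0) (Real.logb b) := by
  refine (strictConcaveOn_log_Ioi.concaveOn.smul (inv_nonneg.2 (Real.log_pos hb).le)).congr ?_
  exact fun x _ => inv_mul_eq_div (Real.log b) (Real.log x)

theorem concaveOn_logb_one_add_mul {b : ℝ} (hb : 1 < b) (c : ℝ) :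
    ConcaveOn ℝ {u | 0 < 1 + c * u} (fun u => Real.logb b (1 + c * u)) :=
  ((concaveOn_logb_Ioi hb).translate_right 1).comp_linearMap (LinearMap.mulLeft ℝ c)

theorem rate_concaveOn_general {b : ℝ} (hb : 1 < b) (c : ℝ) :
    ConcaveOn ℝ {x : ℝ × ℝ | 0 < x.2 ∧ 0 < 1 + c * (x.1 / x.2)}
      (fun x => x.2 * Real.logb b (1 + c * (x.1 / x.2))) := by
  have h := concaveOn_perspective (concaveOn_logb_one_add_mul hb c)
  unfold perspective at h
  simpa only [Set.mem_ofPred_eq, smul_eq_mul, inv_mul_eq_div] using h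

/-- The uplink rate function `r(p,B) = B * log₂(1 + p*g/(N₀*B))`
is jointly concave with respect to `(p,B)` on the open positive quadrant. -/
theorem rate_concaveOn (g N₀ : ℝ) (hg : 0 < g) (hN₀ : 0 < N₀) :
    ConcaveOn ℝ {x : ℝ × ℝ | 0 < x.1 ∧ 0 < x.2}
      (fun x : ℝ × ℝ => x.2 * Real.logb 2 (1 + x.1 * g / (N₀ * x.2))) := by
  have quadrant_convex : Convex ℝ {x : ℝ × ℝ | 0 < x.1 ∧ 0 < x.2} :=
    (convex_Ioi 0).prod (convex_Ioi 0)
  have quadrant_subset : {x : ℝ × ℝ | 0 < x.1 ∧ 0 < x.2} ⊆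
      {x | 0 < x.2 ∧ 0 < 1 + g / N₀ * (x.1 / x.2)} :=
    fun x ⟨hp, hB⟩ => ⟨hB, by positivity⟩
  simpa only [div_mul_div_comm, mul_comm g] using
    (rate_concaveOn_general one_lt_two (g / N₀)).subset quadrant_subset quadrant_convex
end

section
/- Let E be a real normed vector space, C ⊆ E an open convex set, and u, v : E → ℝ functions that are differentiable at every point of C. Assume u is convex on C with u(x) ≥ 0 for all x ∈ C, and v is concave on C with v(x) > 0 for all x ∈ C. Then the ratio u/v is pseudoconvex on C: for all x, y ∈ C, if the Fréchet derivative of the function z ↦ u(z)/v(z) at x applied to y − x is nonnegative, then u(y)/v(y) ≥ u(x)/v(x). -/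
/-!
Write `q = u / v`. Along the segment from `x` to `y`, convexity of `u` and concavity of `v` bound
`q` above by the quotient of the affine interpolations of `u` and `v`, with equality at `x`.
Comparing the right derivatives of the two functions at `x` gives the gradient inequality
`q' (y - x) ≤ (u y * v x - u x * v y) / v x ^ 2`. The right-hand side has the sign of `q y - q x`.
-/

open AffineMap Set Filter Topology

theorem div_lineMap_le_lineMap_div_lineMap {𝕜 E : Type*} [Field 𝕜] [LinearOrder 𝕜]
    [IsStrictOrderedRing 𝕜] [AddCommGroup E] [Module 𝕜 E]
    {C : Set E} {u v : E → 𝕜} {x y : E} {t : 𝕜}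
    (hu : ConvexOn 𝕜 C u) (hv : ConcaveOn 𝕜 C v) (hx : x ∈ C) (hy : y ∈ C)
    (hux : 0 ≤ u x) (huy : 0 ≤ u y) (hvx : 0 < v x) (hvy : 0 < v y) (ht : t ∈ Icc 0 1) :
    u (lineMap x y t) / v (lineMap x y t) ≤
      lineMap (u x) (u y) t / lineMap (v x) (v y) t := by
  have hnum_nonneg : 0 ≤ lineMap (u x) (u y) t := (convex_Ici 0).lineMap_mem hux huy ht
  have hden_pos : 0 < lineMap (v x) (v y) t := (convex_Ioi 0).lineMap_mem hvx hvy ht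
  have hnum : u (lineMap x y t) ≤ lineMap (u x) (u y) t := by
    simpa only [lineMap_apply_module] using
      hu.2 hx hy (sub_nonneg.2 ht.2) ht.1 (sub_add_cancel 1 t)
  have hden : lineMap (v x) (v y) t ≤ v (lineMap x y t) := by
    simpa only [lineMap_apply_module] using
      hv.2 hx hy (sub_nonneg.2 ht.2) ht.1 (sub_add_cancel 1 t)
  exact div_le_div₀ hnum_nonneg hnum hden_pos hden

theorem hasDerivAt_lineMap_div_lineMap_zero {𝕜 : Type*} [NontriviallyNormedField 𝕜]
    {a b c d : 𝕜} (hc : c ≠ 0) :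
    HasDerivAt (fun t : 𝕜 => lineMap a b t / lineMap c d t) ((b * c - a * d) / c ^ 2) 0 := by
  have h := (hasDerivAt_lineMap (a := a) (b := b) (x := (0 : 𝕜))).fun_div
    (hasDerivAt_lineMap (a := c) (b := d)) (by rwa [lineMap_apply_zero])
  have hcoeff : (b - a) * c - a * (d - c) = b * c - a * d := by ring
  rwa [lineMap_apply_zero, lineMap_apply_zero, hcoeff] at h

theorem hasDerivWithinAt_Ioi_le_of_eventuallyLE {f g : ℝ → ℝ} {f' g' a : ℝ}
    (hf : HasDerivWithinAt f f' (Ioi a) a) (hg : HasDerivWithinAt g g' (Ioi a) a)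
    (ha : f a = g a) (hle : f ≤ᶠ[𝓝[>] a] g) : f' ≤ g' := by
  rw [hasDerivWithinAt_iff_tendsto_slope' self_notMem_Ioi] at hf hg
  refine le_of_tendsto_of_tendsto hf hg ?_
  filter_upwards [hle, self_mem_nhdsWithin] with t hfg hat
  rw [slope_def_field, slope_def_field, ha]
  gcongr
  exact sub_nonneg.2 (le_of_lt hat)

section

variable {E : Type*} [NormedAddCommGroup E] [NormedSpace ℝ E]

theorem hasDerivWithinAt_comp_lineMap_Ioi {F : Type*} [NormedAddCommGroup F] [NormedSpace ℝ F]
    {C : Set E} {f : E → F} {f' : E →L[ℝ] F} {x y : E} (hC : Convex ℝ C)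
    (hf : HasFDerivWithinAt f f' C x) (hx : x ∈ C) (hy : y ∈ C) :
    HasDerivWithinAt (fun t : ℝ => f (lineMap x y t)) (f' (y - x)) (Ioi 0) 0 :=
  (hf.comp_hasDerivWithinAt_of_eq 0 hasDerivWithinAt_lineMap (hC.mapsTo_lineMap hx hy)
    (lineMap_apply_zero x y).symm).mono_of_mem_nhdsWithin (Icc_mem_nhdsGT zero_lt_one)

variable {C : Set E} {u v : E → ℝ} {q' : E →L[ℝ] ℝ} {x y : E}

theorem hasFDerivWithinAt_div_apply_sub_le
    (hu : ConvexOn ℝ C u) (hv : ConcaveOn ℝ C v) (hx : x ∈ C) (hy : y ∈ C)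
    (hux : 0 ≤ u x) (huy : 0 ≤ u y) (hvx : 0 < v x) (hvy : 0 < v y)
    (hq : HasFDerivWithinAt (fun z => u z / v z) q' C x) :
    q' (y - x) ≤ (u y * v x - u x * v y) / v x ^ 2 := by
  refine hasDerivWithinAt_Ioi_le_of_eventuallyLE
    (hasDerivWithinAt_comp_lineMap_Ioi hu.1 hq hx hy)
    (hasDerivAt_lineMap_div_lineMap_zero hvx.ne').hasDerivWithinAt
    (by simp only [lineMap_apply_zero]) ?_
  filter_upwards [Icc_mem_nhdsGT zero_lt_one] with t ht
  exact div_lineMap_le_lineMap_div_lineMap hu hv hx hy hux huy hvx hvy ht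

theorem ratio_convex_over_concave_pseudoconvex_general
    (hu : ConvexOn ℝ C u) (hv : ConcaveOn ℝ C v) (hx : x ∈ C) (hy : y ∈ C)
    (hux : 0 ≤ u x) (huy : 0 ≤ u y) (hvx : 0 < v x) (hvy : 0 < v y)
    (hq : HasFDerivWithinAt (fun z => u z / v z) q' C x) (hnonneg : 0 ≤ q' (y - x)) :
    u x / v x ≤ u y / v y := by
  have hdiv : 0 ≤ (u y * v x - u x * v y) / v x ^ 2 := hnonneg.trans <|
    hasFDerivWithinAt_div_apply_sub_le hu hv hx hy hux huy hvx hvy hq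
  have hcross : 0 ≤ u y * v x - u x * v y := by
    simpa only [zero_mul] using (le_div_iff₀ (pow_pos hvx 2)).1 hdiv
  exact (div_le_div_iff₀ hvx hvy).2 (sub_nonneg.1 hcross)

end

/-- a ratio of a nonnegative convex differentiable numerator and a
positive concave differentiable denominator is pseudoconvex on an open convex
set. -/
theorem ratio_convex_over_concave_pseudoconvex
    {E : Type*} [NormedAddCommGroup E] [NormedSpace ℝ E]
    (C : Set E) (hCopen : IsOpen C) (hCconv : Convex ℝ C)
    (u v : E → ℝ)
    (hu_diff : ∀ x ∈ C, DifferentiableAt ℝ u x)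
    (hv_diff : ∀ x ∈ C, DifferentiableAt ℝ v x)
    (hu_conv : ConvexOn ℝ C u) (hu_nonneg : ∀ x ∈ C, 0 ≤ u x)
    (hv_conc : ConcaveOn ℝ C v) (hv_pos : ∀ x ∈ C, 0 < v x) :
    ∀ x ∈ C, ∀ y ∈ C,
      0 ≤ fderiv ℝ (fun z => u z / v z) x (y - x) → u x / v x ≤ u y / v y := by
  intro x hx y hy
  have hratio : DifferentiableAt ℝ (fun z => u z / v z) x := by
    simpa only [div_eq_mul_inv] using
      (hu_diff x hx).fun_mul ((hv_diff x hx).fun_inv (hv_pos x hx).ne')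
  exact ratio_convex_over_concave_pseudoconvex_general hu_conv hv_conc hx hy (hu_nonneg x hx)
    (hu_nonneg y hy) (hv_pos x hx) (hv_pos y hy) hratio.hasFDerivAt.hasFDerivWithinAt
end

section
/- Let E be a real normed vector space, S ⊆ E a convex set, ι a finite index set, and ω > 0. For each i ∈ ι, let uᵢ, vᵢ : E → ℝ be differentiable at a point x* ∈ S, with uᵢ convex on S and uᵢ(x) ≥ 0 for all x ∈ S, and vᵢ concave on S and vᵢ(x) > 0 for all x ∈ S. Suppose x* is a global minimizer over S of the sum of ratios H(x) = Σᵢ uᵢ(x)/vᵢ(x). Define γᵢ* = ω/vᵢ(x*) and δᵢ* = uᵢ(x*)/vᵢ(x*). Then x* is a global minimizer over S of the parametric objective G(x) = Σᵢ γᵢ* · (uᵢ(x) − δᵢ* · vᵢ(x)), and G(x*) = 0; in particular Σᵢ γᵢ* · (uᵢ(x) − δᵢ* · vᵢ(x)) ≥ 0 for every x ∈ S. (Theorem 1: the sum-of-ratios problem P₆ and the parametric problem P₇ with γ = γ*, δ = δ* share the optimal solution, and γₙ* = ω₂/rₙ(pₙ*,Bₙ*), δₙ* = pₙ*ρₙdₙDₙ/rₙ(pₙ*,Bₙ*).)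 -/
/-!
Along the segment from `xstar` to `x`, replace each `u i` by its chord, which lies above it, and
each `v i` by its chord, which lies below it. The sum of the ratios of the chords majorizes `H` on
the segment and agrees with `H` at `xstar`, so it too has a minimum there. It is smooth whatever the
regularity of `u i` and `v i`, so its one-sided derivative at `xstar` is nonnegative; this
derivative is `∑ i, (u i x - δ i * v i x) / v i xstar`, and `G x` is `ω` times it.
-/

open AffineMap Set Topology

section ChordBounds

variable {𝕜 E β : Type*} [Ring 𝕜] [PartialOrder 𝕜] [IsOrderedAddMonoid 𝕜] [AddCommGroup E]
  [Module 𝕜 E] [AddCommGroup β] [PartialOrder β] [Module 𝕜 β] {S : Set E} {f g : E → β}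
  {a x : E} {t : 𝕜}

theorem convexOn_apply_lineMap_le (hf : ConvexOn 𝕜 S f) (ha : a ∈ S) (hx : x ∈ S)
    (ht : t ∈ Icc 0 1) : f (lineMap a x t) ≤ lineMap (f a) (f x) t := by
  simpa only [lineMap_apply_module] using
    hf.2 ha hx (sub_nonneg.2 ht.2) ht.1 (sub_add_cancel 1 t)

theorem lineMap_le_concaveOn_apply (hg : ConcaveOn 𝕜 S g) (ha : a ∈ S) (hx : x ∈ S)
    (ht : t ∈ Icc 0 1) : lineMap (g a) (g x) t ≤ g (lineMap a x t) := by
  simpa only [lineMap_apply_module] using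
    hg.2 ha hx (sub_nonneg.2 ht.2) ht.1 (sub_add_cancel 1 t)

end ChordBounds

theorem div_apply_lineMap_le_div_lineMap {𝕜 E : Type*} [Field 𝕜] [LinearOrder 𝕜]
    [IsStrictOrderedRing 𝕜] [AddCommGroup E] [Module 𝕜 E] {S : Set E} {f g : E → 𝕜} {a x : E}
    {t : 𝕜} (hf : ConvexOn 𝕜 S f) (hf_nonneg : ∀ y ∈ S, 0 ≤ f y)
    (hg : ConcaveOn 𝕜 S g) (hg_pos : ∀ y ∈ S, 0 < g y) (ha : a ∈ S) (hx : x ∈ S)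
    (ht : t ∈ Icc 0 1) :
    f (lineMap a x t) / g (lineMap a x t) ≤
      lineMap (f a) (f x) t / lineMap (g a) (g x) t := by
  have hf_le := convexOn_apply_lineMap_le hf ha hx ht
  have hf_lineMap : 0 ≤ f (lineMap a x t) := hf_nonneg _ (hf.1.lineMap_mem ha hx ht)
  have hchord_pos : 0 < lineMap (g a) (g x) t :=
    (convex_Ioi 0).lineMap_mem (hg_pos a ha) (hg_pos x hx) ht
  exact div_le_div₀ (hf_lineMap.trans hf_le) hf_le hchord_pos
    (lineMap_le_concaveOn_apply hg ha hx ht)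

theorem hasDerivAt_lineMap_div_lineMap_zero_s4 {𝕜 : Type*} [NontriviallyNormedField 𝕜]
    {p q : 𝕜} (p' q' : 𝕜) (hq : q ≠ 0) :
    HasDerivAt (fun t : 𝕜 => lineMap p p' t / lineMap q q' t) ((p' - p / q * q') / q) 0 := by
  have hquot : HasDerivAt (fun t : 𝕜 => lineMap p p' t / lineMap q q' t)
      (((p' - p) * q - p * (q' - q)) / q ^ 2) 0 := by
    simpa only [lineMap_apply_zero] using
      (hasDerivAt_lineMap (a := p) (b := p') (x := (0 : 𝕜))).fun_div
        (hasDerivAt_lineMap (a := q) (b := q')) (by rwa [lineMap_apply_zero])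
  convert hquot using 1
  field_simp
  ring

theorem hasDerivWithinAt_nonneg_of_isLocalMinOn_left {f : ℝ → ℝ} {f' a b : ℝ} (hab : a < b)
    (hmin : IsLocalMinOn f (Icc a b) a) (hf : HasDerivWithinAt f f' (Icc a b) a) : 0 ≤ f' := by
  have hcone : b - a ∈ posTangentConeAt (Icc a b) a :=
    sub_mem_posTangentConeAt_of_segment_subset (segment_eq_Icc hab.le).subset
  have hmul : 0 ≤ (b - a) * f' := by
    simpa using hmin.hasFDerivWithinAt_nonneg hf.hasFDerivWithinAt hcone
  exact nonneg_of_mul_nonneg_right hmul (sub_pos.2 hab)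

theorem isLocalMinOn_comp_lineMap {E β : Type*} [AddCommGroup E] [Module ℝ E]
    [TopologicalSpace E] [IsTopologicalAddGroup E] [ContinuousSMul ℝ E] [Preorder β] {S : Set E}
    {f : E → β} {a x : E} (hS : Convex ℝ S) (ha : a ∈ S) (hx : x ∈ S)
    (hmin : IsLocalMinOn f S a) :
    IsLocalMinOn (fun t : ℝ => f (lineMap a x t)) (Icc 0 1) 0 := by
  have hlim : Filter.Tendsto (lineMap a x : ℝ → E) (𝓝[Icc 0 1] 0) (𝓝[S] a) := by
    have hcont : ContinuousWithinAt (lineMap a x : ℝ → E) (Icc 0 1) 0 :=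
      lineMap_continuous.continuousWithinAt
    simpa only [lineMap_apply_zero] using
      hcont.tendsto_nhdsWithin (hS.mapsTo_lineMap ha hx)
  exact IsMinFilter.comp_tendsto (by rwa [lineMap_apply_zero]) hlim

section SumOfRatios

variable {E ι : Type*} [AddCommGroup E] [Module ℝ E] [TopologicalSpace E]
  [IsTopologicalAddGroup E] [ContinuousSMul ℝ E] [Fintype ι]
  {S : Set E} {u v : ι → E → ℝ} {a x : E}

theorem isLocalMinOn_sum_lineMap_div_lineMap (hS : Convex ℝ S) (ha : a ∈ S) (hx : x ∈ S)
    (hu_conv : ∀ i, ConvexOn ℝ S (u i)) (hu_nonneg : ∀ i, ∀ y ∈ S, 0 ≤ u i y)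
    (hv_conc : ∀ i, ConcaveOn ℝ S (v i)) (hv_pos : ∀ i, ∀ y ∈ S, 0 < v i y)
    (hmin : IsLocalMinOn (fun y => ∑ i, u i y / v i y) S a) :
    IsLocalMinOn (fun t : ℝ => ∑ i, lineMap (u i a) (u i x) t / lineMap (v i a) (v i x) t)
      (Icc 0 1) 0 := by
  refine Filter.EventuallyLE.isMinFilter ?majorizes ?agrees
    (isLocalMinOn_comp_lineMap hS ha hx hmin)
  case majorizes =>
    filter_upwards [self_mem_nhdsWithin] with t ht
    exact Finset.sum_le_sum fun i _ =>
      div_apply_lineMap_le_div_lineMap (hu_conv i) (hu_nonneg i) (hv_conc i) (hv_pos i) ha hx ht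
  case agrees => simp only [lineMap_apply_zero]

theorem sum_sub_div_mul_div_nonneg_of_isLocalMinOn (hS : Convex ℝ S) (ha : a ∈ S) (hx : x ∈ S)
    (hu_conv : ∀ i, ConvexOn ℝ S (u i)) (hu_nonneg : ∀ i, ∀ y ∈ S, 0 ≤ u i y)
    (hv_conc : ∀ i, ConcaveOn ℝ S (v i)) (hv_pos : ∀ i, ∀ y ∈ S, 0 < v i y)
    (hmin : IsLocalMinOn (fun y => ∑ i, u i y / v i y) S a) :
    0 ≤ ∑ i, (u i x - u i a / v i a * v i x) / v i a := by
  have hderiv : HasDerivAt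
      (fun t : ℝ => ∑ i, lineMap (u i a) (u i x) t / lineMap (v i a) (v i x) t)
      (∑ i, (u i x - u i a / v i a * v i x) / v i a) 0 :=
    HasDerivAt.fun_sum fun i _ =>
      hasDerivAt_lineMap_div_lineMap_zero_s4 (u i x) (v i x) (hv_pos i a ha).ne'
  exact hasDerivWithinAt_nonneg_of_isLocalMinOn_left one_pos
    (isLocalMinOn_sum_lineMap_div_lineMap hS ha hx hu_conv hu_nonneg hv_conc hv_pos hmin)
    hderiv.hasDerivWithinAt

end SumOfRatios

theorem sum_of_ratios_parametric_equivalence_general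
    {E : Type*} [AddCommGroup E] [Module ℝ E] [TopologicalSpace E] [IsTopologicalAddGroup E]
    [ContinuousSMul ℝ E] {ι : Type*} [Fintype ι]
    {S : Set E} (hS : Convex ℝ S) {ω : ℝ} (hω : 0 ≤ ω)
    {u v : ι → E → ℝ} {xstar : E} (hxstar : xstar ∈ S)
    (hu_conv : ∀ i, ConvexOn ℝ S (u i))
    (hu_nonneg : ∀ i, ∀ x ∈ S, 0 ≤ u i x)
    (hv_conc : ∀ i, ConcaveOn ℝ S (v i))
    (hv_pos : ∀ i, ∀ x ∈ S, 0 < v i x)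
    (hmin : IsLocalMinOn (fun x => ∑ i, u i x / v i x) S xstar)
    {γ δ : ι → ℝ}
    (hγ : ∀ i, γ i = ω / v i xstar) (hδ : ∀ i, δ i = u i xstar / v i xstar) :
    (∀ x ∈ S, ∑ i, γ i * (u i xstar - δ i * v i xstar) ≤
        ∑ i, γ i * (u i x - δ i * v i x)) ∧
    (∑ i, γ i * (u i xstar - δ i * v i xstar) = 0) ∧
    (∀ x ∈ S, 0 ≤ ∑ i, γ i * (u i x - δ i * v i x)) := by
  have hzero : ∑ i, γ i * (u i xstar - δ i * v i xstar) = 0 :=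
    Finset.sum_eq_zero fun i _ => by
      rw [hδ, div_mul_cancel₀ _ (hv_pos i xstar hxstar).ne', sub_self, mul_zero]
  have hnonneg : ∀ x ∈ S, 0 ≤ ∑ i, γ i * (u i x - δ i * v i x) := fun x hx =>
    calc
      0 ≤ ω * ∑ i, (u i x - u i xstar / v i xstar * v i x) / v i xstar :=
        mul_nonneg hω <| sum_sub_div_mul_div_nonneg_of_isLocalMinOn hS hxstar hx
          hu_conv hu_nonneg hv_conc hv_pos hmin
      _ = ∑ i, γ i * (u i x - δ i * v i x) := by
        simp only [Finset.mul_sum, hγ, hδ, div_mul_eq_mul_div, mul_div_assoc]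
  exact ⟨fun x hx => hzero.trans_le (hnonneg x hx), hzero, hnonneg⟩

/-- equivalence between the sum-of-ratios problem and the
parametric problem at the optimal parameters (Theorem 1). -/
theorem sum_of_ratios_parametric_equivalence
    {E : Type*} [NormedAddCommGroup E] [NormedSpace ℝ E]
    {ι : Type*} [Fintype ι]
    (S : Set E) (hS : Convex ℝ S) (ω : ℝ) (hω : 0 < ω)
    (u v : ι → E → ℝ) (xstar : E) (hxstar : xstar ∈ S)
    (hu_diff : ∀ i, DifferentiableAt ℝ (u i) xstar)
    (hv_diff : ∀ i, DifferentiableAt ℝ (v i) xstar)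
    (hu_conv : ∀ i, ConvexOn ℝ S (u i))
    (hu_nonneg : ∀ i, ∀ x ∈ S, 0 ≤ u i x)
    (hv_conc : ∀ i, ConcaveOn ℝ S (v i))
    (hv_pos : ∀ i, ∀ x ∈ S, 0 < v i x)
    (hmin : ∀ x ∈ S, ∑ i, u i xstar / v i xstar ≤ ∑ i, u i x / v i x)
    (γ δ : ι → ℝ)
    (hγ : ∀ i, γ i = ω / v i xstar) (hδ : ∀ i, δ i = u i xstar / v i xstar) :
    (∀ x ∈ S, ∑ i, γ i * (u i xstar - δ i * v i xstar) ≤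
        ∑ i, γ i * (u i x - δ i * v i x)) ∧
    (∑ i, γ i * (u i xstar - δ i * v i xstar) = 0) ∧
    (∀ x ∈ S, 0 ≤ ∑ i, γ i * (u i x - δ i * v i x)) :=
  sum_of_ratios_parametric_equivalence_general hS hω.le hxstar hu_conv hu_nonneg hv_conc hv_pos
    (isMinOn_iff.2 hmin).localize hγ hδ
end
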